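/- Let f: Z_1 → Z_2 be a morphism between two strongly boundary reduced tiled surfaces and let Y be a sub-tiled-surface of Z_1. Then f(SBR(Y↪Z_1)) ⊆ SBR(f(Y)↪Z_2). -/

import Mathlib

/-!
Formalization preamble for "Core Surfaces" (Magee–Puder).

We work with a fixed combinatorial (CW) model.  The surface `Σ_g` has one vertex,
`2g` directed labeled edges (the label `2i` plays the role of `a_{i+1}` and `2i+1`
the role of `b_{i+1}`), and one `4g`-gon glued along `[a₁,b₁]⋯[a_g,b_g]`.

* `Gamma g` is the surface group, presented by the single relator.
* A `Complex g` is a combinatorial 2-complex with directed, labeled edges and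
  2-cells given by their boundary walks; coverings of `Σ_g` are the complexes in
  which every vertex has exactly one incoming/outgoing edge of each label, every
  walk reading the relator is closed, and every closed walk reading the relator
  bounds exactly one face (`IsCovering`).  A tiled surface is a complex that
  embeds into such a covering (`IsTiledSurface`).
* Blocks, chains, boundary cycles (via the ribbon structure coming from the fixed
  cyclic order of the `4g` half-edges around a vertex of `Σ_g`), boundary-reduced
  and strongly boundary-reduced surfaces are defined combinatorially.
* Homotopy of edge-walks is the edge-path-group homotopy: backtrack insertions and
  insertions of boundaries of (present) faces.
* `cover g J` is the covering space `J\~Σ_g` of `Σ_g` associated to a subgroup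
  `J ≤ Γ_g` (vertices = right cosets), and `coreSub g J` is the core surface of
  `J`, defined exactly as in the paper: the union of all shortest representative
  cycles of essential free-homotopy classes, together with all components of the
  complement containing finitely many `4g`-gons.
-/

noncomputable section

namespace CS

/-- Signed letters over the generators `a₁,b₁,…,a_g,b_g` of `Γ_g`
(`a_{i+1} ↦ 2i`, `b_{i+1} ↦ 2i+1`); `true` means a positive letter. -/
abbrev Letter (g : ℕ) := Fin (2 * g) × Bool

/-- The label of the `p`-th letter of the relator `[a₁,b₁][a₂,b₂]⋯[a_g,b_g]`. -/
def relLabel (g : ℕ) (p : Fin (4 * g)) : Fin (2 * g) :=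
  ⟨2 * ((p : ℕ) / 4) + ((p : ℕ) % 4) % 2, by have := p.2; omega⟩

/-- The sign of the `p`-th letter of the relator. -/
def relSign (g : ℕ) (p : Fin (4 * g)) : Bool := decide ((p : ℕ) % 4 < 2)

/-- The relator `[a₁,b₁][a₂,b₂]⋯[a_g,b_g]` as a word (list of signed letters). -/
def relatorWord (g : ℕ) : List (Letter g) :=
  (List.finRange (4 * g)).map fun p => (relLabel g p, relSign g p)

/-- The relator as an element of the free group on the `2g` generators. -/
def relatorF (g : ℕ) : FreeGroup (Fin (2 * g)) :=
  ((relatorWord g).map fun l => if l.2 then FreeGroup.of l.1 else (FreeGroup.of l.1)⁻¹).prod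

/-- The surface group `Γ_g = ⟨a₁,b₁,…,a_g,b_g ∣ [a₁,b₁]⋯[a_g,b_g]⟩`. -/
abbrev Gamma (g : ℕ) := PresentedGroup ({relatorF g} : Set (FreeGroup (Fin (2 * g))))

/-- The image of a signed letter in `Γ_g`. -/
def letterG {g : ℕ} (l : Letter g) : Gamma g :=
  if l.2 then PresentedGroup.of l.1 else (PresentedGroup.of l.1)⁻¹

/-- The image of a word in `Γ_g`. -/
def wordG {g : ℕ} (w : List (Letter g)) : Gamma g := (w.map letterG).prod

/-- `ℓ(γ^{Γ_g})`: the minimal length of a word in the generators representing the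
conjugacy class of `γ` in `Γ_g`. -/
def conjLen {g : ℕ} (γ : Gamma g) : ℕ :=
  sInf {n | ∃ w : List (Letter g), w.length = n ∧ ∃ x : Gamma g, x * wordG w * x⁻¹ = γ}

/-! ### Half-edge positions around a vertex of `Σ_g`

The `4g` half-edges around the vertex `o` of `Σ_g` come in the (clockwise) cyclic
order `a₁`-out, `b₁`-in, `a₁`-in, `b₁`-out, `a₂`-out, `b₂`-in, `a₂`-in, `b₂`-out, …
-/

/-- Position of the outgoing `ℓ`-labeled half-edge in the cyclic order. -/
def posOut {g : ℕ} (ℓ : Fin (2 * g)) : ℕ :=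
  if (ℓ : ℕ) % 2 = 0 then 2 * (ℓ : ℕ) else 2 * (ℓ : ℕ) + 1

/-- Position of the incoming `ℓ`-labeled half-edge in the cyclic order. -/
def posIn {g : ℕ} (ℓ : Fin (2 * g)) : ℕ :=
  if (ℓ : ℕ) % 2 = 0 then 2 * (ℓ : ℕ) + 2 else 2 * (ℓ : ℕ) - 1

/-- The position of the half-edge through which a traversal of a dart with signed
letter `s` *arrives* at its terminal vertex. -/
def posArr {g : ℕ} (s : Letter g) : ℕ := if s.2 then posIn s.1 else posOut s.1

/-- The position of the half-edge through which a traversal of a dart with signed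
letter `s` *leaves* its initial vertex. -/
def posLv {g : ℕ} (s : Letter g) : ℕ := if s.2 then posOut s.1 else posIn s.1

/-- The number of half-edges strictly between the arrival half-edge of `s` and the
departure half-edge of `t`, in the clockwise cyclic order of the `4g` half-edges
around a vertex. -/
def gapN {g : ℕ} (s t : Letter g) : ℕ := (posLv t + 4 * g - (posArr s + 1)) % (4 * g)

/-! ### Combinatorial complexes -/

/-- A combinatorial at-most-2-dimensional CW-complex with directed edges labeled by
the generators of `Γ_g`, and 2-cells recorded by their boundary walks (lists of
darts, i.e. edges with a direction of traversal). -/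
structure Complex (g : ℕ) where
  V : Type
  E : Type
  F : Type
  src : E → V
  dst : E → V
  lab : E → Fin (2 * g)
  bdry : F → List (E × Bool)

namespace Complex

variable {g : ℕ} (Y : Complex g)

/-- Darts: edges together with a direction of traversal (`true` = forward). -/
abbrev D := Y.E × Bool

/-- The initial vertex of a dart. -/
def dTail (d : Y.D) : Y.V := if d.2 then Y.src d.1 else Y.dst d.1

/-- The terminal vertex of a dart. -/
def dHead (d : Y.D) : Y.V := if d.2 then Y.dst d.1 else Y.src d.1

/-- The reversal of a dart. -/
def dRev (d : Y.D) : Y.D := (d.1, !d.2)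

/-- The signed letter read by a dart. -/
def dLet (d : Y.D) : Letter g := (Y.lab d.1, d.2)

/-- The word read along a list of darts. -/
def wordOf (l : List Y.D) : List (Letter g) := l.map Y.dLet

/-- The reversed walk. -/
def revW (l : List Y.D) : List Y.D := (l.map Y.dRev).reverse

/-- `WalkFrom u v l` : `l` is a walk (edge-path) from `u` to `v`. -/
inductive WalkFrom : Y.V → Y.V → List Y.D → Prop
  | nil (v : Y.V) : WalkFrom v v []
  | cons (d : Y.D) {v : Y.V} {l : List Y.D} :
      WalkFrom (Y.dHead d) v l → WalkFrom (Y.dTail d) v (d :: l)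

/-- All darts of `l` use edges from the set `sE`. -/
def InSet (sE : Set Y.E) (l : List Y.D) : Prop := ∀ d ∈ l, d.1 ∈ sE

/-- Two darts are adjacent (can be traversed consecutively). -/
def adj (d d' : Y.D) : Prop := Y.dHead d = Y.dTail d'

/-- A nonempty closed walk. -/
def IsCycle (c : List Y.D) : Prop := c ≠ [] ∧ ∃ v, Y.WalkFrom v v c

/-- **P1**: at most one incoming and at most one outgoing `ℓ`-labeled edge at every
vertex, for every label `ℓ`. -/
def P1 : Prop :=
  (∀ e e' : Y.E, Y.src e = Y.src e' → Y.lab e = Y.lab e' → e = e') ∧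
  (∀ e e' : Y.E, Y.dst e = Y.dst e' → Y.lab e = Y.lab e' → e = e')

/-- **P2**: every walk reading a word equal to `1` in `Γ_g` is closed. -/
def P2 : Prop :=
  ∀ (u v : Y.V) (l : List Y.D), Y.WalkFrom u v l → wordG (Y.wordOf l) = 1 → u = v

/-- **P3**: every 2-cell is glued along a closed walk reading the relator
`[a₁,b₁]⋯[a_g,b_g]`, and every such closed walk bounds at most one 2-cell. -/
def P3 : Prop :=
  (∀ f : Y.F, (∃ v, Y.WalkFrom v v (Y.bdry f)) ∧ Y.wordOf (Y.bdry f) = relatorWord g) ∧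
  Function.Injective Y.bdry

/-- A combinatorial covering space of `Σ_g`: every vertex has exactly one outgoing
and one incoming edge of each label, every walk reading the relator is closed, and
every closed walk reading the relator bounds exactly one `4g`-gon. -/
def IsCovering : Prop :=
  Y.P1 ∧ Y.P3 ∧
  (∀ (v : Y.V) (ℓ : Fin (2 * g)), ∃ e, Y.src e = v ∧ Y.lab e = ℓ) ∧
  (∀ (v : Y.V) (ℓ : Fin (2 * g)), ∃ e, Y.dst e = v ∧ Y.lab e = ℓ) ∧
  (∀ (u v : Y.V) (l : List Y.D), Y.WalkFrom u v l → Y.wordOf l = relatorWord g → u = v) ∧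
  (∀ (v : Y.V) (l : List Y.D), Y.WalkFrom v v l → Y.wordOf l = relatorWord g →
    ∃ f, Y.bdry f = l)

end Complex

/-- A morphism of labeled complexes: maps cells to cells of the same dimension and
respects sources, targets, labels and face boundaries (equivalently, commutes with
the immersions to `Σ_g`). -/
structure Hom {g : ℕ} (Y Z : Complex g) where
  mV : Y.V → Z.V
  mE : Y.E → Z.E
  mF : Y.F → Z.F
  hsrc : ∀ e, Z.src (mE e) = mV (Y.src e)
  hdst : ∀ e, Z.dst (mE e) = mV (Y.dst e)
  hlab : ∀ e, Z.lab (mE e) = Y.lab e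
  hbdry : ∀ f, Z.bdry (mF f) = (Y.bdry f).map fun d => (mE d.1, d.2)

namespace Hom

variable {g : ℕ} {Y Z : Complex g}

/-- The induced map on darts. -/
def mD (φ : Hom Y Z) (d : Y.D) : Z.D := (φ.mE d.1, d.2)

/-- Injectivity (an embedding of complexes). -/
def Inj (φ : Hom Y Z) : Prop :=
  Function.Injective φ.mV ∧ Function.Injective φ.mE ∧ Function.Injective φ.mF

end Hom

namespace Complex

variable {g : ℕ} (Y : Complex g)

/-- A tiled surface: a complex which embeds into a combinatorial covering space of
`Σ_g` (compatibly with directions and labels). -/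
def IsTiledSurface : Prop :=
  ∃ Z : Complex g, Z.IsCovering ∧ ∃ φ : Hom Y Z, φ.Inj

/-- Connectivity of a complex (any two vertices are joined by a walk). -/
def Connected : Prop := Nonempty Y.V ∧ ∀ v w : Y.V, ∃ l, Y.WalkFrom v w l

/-! ### Blocks and chains -/

/-- A block: a nonempty walk such that successive darts have no half-edges between
them (hence it reads a subword of the cyclic relator, of length at most `4g`). -/
def IsBlock (l : List Y.D) : Prop :=
  l ≠ [] ∧ l.length ≤ 4 * g ∧
  List.Chain' (fun d d' => Y.adj d d' ∧ gapN (Y.dLet d) (Y.dLet d') = 0) l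

/-- Two blocks are consecutive: concatenation is a walk and there is exactly one
half-edge between the last dart of the first and the first dart of the second. -/
def chainStep (b b' : List Y.D) : Prop :=
  ∃ d d', b.getLast? = some d ∧ b'.head? = some d' ∧ Y.adj d d' ∧
    gapN (Y.dLet d) (Y.dLet d') = 1

/-- A chain: a nonempty sequence of consecutive blocks. -/
def IsChain (bs : List (List Y.D)) : Prop :=
  bs ≠ [] ∧ (∀ b ∈ bs, Y.IsBlock b) ∧ List.Chain' Y.chainStep bs

/-- A cyclic chain: a chain whose blocks pave an entire cycle. -/
def IsCyclicChain (bs : List (List Y.D)) : Prop :=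
  Y.IsChain bs ∧ ∃ b b', bs.getLast? = some b ∧ bs.head? = some b' ∧ Y.chainStep b b'

/-- A long chain: a chain of consecutive blocks of lengths `2g, 2g−1, …, 2g−1, 2g`. -/
def IsLongChain (bs : List (List Y.D)) : Prop :=
  Y.IsChain bs ∧ ∃ k, bs.map List.length = 2 * g :: (List.replicate k (2 * g - 1) ++ [2 * g])

/-- A half-chain: a cyclic chain all of whose blocks have length `2g − 1`. -/
def IsHalfChain (bs : List (List Y.D)) : Prop :=
  Y.IsCyclicChain bs ∧ ∀ b ∈ bs, b.length = 2 * g - 1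

/-! ### Boundary cycles of the thick version (relative to sets of present edges and
faces), via the ribbon structure -/

/-- `nextD sE d d'`: among darts (with edge in `sE`) leaving the head of `d`, the
dart `d'` is the first one in clockwise order after the arrival half-edge of `d`.
This is the successor map whose orbits trace the boundary components of the thick
version of the ribbon graph. -/
def nextD (sE : Set Y.E) (d d' : Y.D) : Prop :=
  d'.1 ∈ sE ∧ Y.adj d d' ∧
  ∀ d'' : Y.D, d''.1 ∈ sE → Y.adj d d'' →
    gapN (Y.dLet d) (Y.dLet d') ≤ gapN (Y.dLet d) (Y.dLet d'')

/-- The corner between the consecutive darts `d, d'` is filled by a face from `sF`. -/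
def faceStep (sF : Set Y.F) (d d' : Y.D) : Prop :=
  ∃ f ∈ sF, [d, d'] <:+: (Y.bdry f ++ Y.bdry f)

/-- One step along the boundary of the thick version. -/
def bStep (sE : Set Y.E) (sF : Set Y.F) (d d' : Y.D) : Prop :=
  d.1 ∈ sE ∧ Y.nextD sE d d' ∧ ¬ Y.faceStep sF d d'

/-- A (finite segment of a) boundary cycle of the thick version. -/
def BPath (sE : Set Y.E) (sF : Set Y.F) (l : List Y.D) : Prop :=
  l ≠ [] ∧ Y.InSet sE l ∧ List.Chain' (Y.bStep sE sF) l

/-- A (finite) boundary cycle of the thick version. -/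
def BCycle (sE : Set Y.E) (sF : Set Y.F) (l : List Y.D) : Prop :=
  Y.BPath sE sF l ∧ ∃ d d', l.getLast? = some d ∧ l.head? = some d' ∧ Y.bStep sE sF d d'

/-- A dart lying on the boundary of the thick version. -/
def IsBDart (sE : Set Y.E) (sF : Set Y.F) (d : Y.D) : Prop :=
  d.1 ∈ sE ∧ ∃ d', Y.nextD sE d d' ∧ ¬ Y.faceStep sF d d'

/-- Boundary reduced: no boundary cycle contains a long block (length `≥ 2g+1`) or
a long chain. -/
def BoundaryReduced (sE : Set Y.E) (sF : Set Y.F) : Prop :=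
  (∀ l, Y.BPath sE sF l → ¬ (Y.IsBlock l ∧ 2 * g + 1 ≤ l.length)) ∧
  (∀ bs, Y.IsLongChain bs → ¬ Y.BPath sE sF bs.flatten)

/-- Strongly boundary reduced: no boundary cycle contains a half-block (length
exactly `2g`) or a half-chain. -/
def StronglyBoundaryReduced (sE : Set Y.E) (sF : Set Y.F) : Prop :=
  (∀ l, Y.BPath sE sF l → ¬ (Y.IsBlock l ∧ l.length = 2 * g)) ∧
  (∀ bs, Y.IsHalfChain bs → ¬ Y.BCycle sE sF bs.flatten)

/-! ### Combinatorial homotopy of walks -/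

/-- A closed walk traversing the boundary of a face from `sF` (in either direction,
starting anywhere). -/
def faceLoop (sF : Set Y.F) (b : List Y.D) : Prop :=
  ∃ f ∈ sF, ∃ n, b = (Y.bdry f).rotate n ∨ b = Y.revW ((Y.bdry f).rotate n)

/-- Elementary homotopy move: insertion of a backtrack or of a face boundary. -/
def elemMove (sE : Set Y.E) (sF : Set Y.F) (l l' : List Y.D) : Prop :=
  (∃ (l₁ l₂ : List Y.D) (d : Y.D), d.1 ∈ sE ∧ l = l₁ ++ l₂ ∧ l' = l₁ ++ d :: Y.dRev d :: l₂) ∨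
  (∃ l₁ l₂ b, Y.faceLoop sF b ∧ l = l₁ ++ l₂ ∧ l' = l₁ ++ b ++ l₂)

/-- Homotopy (rel endpoints) of walks from `u` to `v`, inside the subcomplex with
edge set `sE` and face set `sF`. -/
def Homotopic (sE : Set Y.E) (sF : Set Y.F) (u v : Y.V) (c c' : List Y.D) : Prop :=
  Relation.EqvGen
    (fun a b =>
      Y.WalkFrom u v a ∧ Y.WalkFrom u v b ∧ Y.InSet sE a ∧ Y.InSet sE b ∧
        (Y.elemMove sE sF a b ∨ Y.elemMove sE sF b a)) c c'

/-- A closed walk which is null-homotopic. -/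
def NullHomotopic (sE : Set Y.E) (sF : Set Y.F) (c : List Y.D) : Prop :=
  ∃ v, Y.WalkFrom v v c ∧ Y.Homotopic sE sF v v c []

/-- An essential cycle: a nonempty closed walk which is not null-homotopic. -/
def Essential (sE : Set Y.E) (sF : Set Y.F) (c : List Y.D) : Prop :=
  Y.IsCycle c ∧ Y.InSet sE c ∧ ¬ Y.NullHomotopic sE sF c

/-- Free homotopy of closed walks. -/
def FreelyHomotopic (sE : Set Y.E) (sF : Set Y.F) (c c' : List Y.D) : Prop :=
  ∃ u v q, Y.WalkFrom u u c ∧ Y.WalkFrom v v c' ∧ Y.WalkFrom u v q ∧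
    Y.InSet sE q ∧ Y.InSet sE c ∧ Y.InSet sE c' ∧
    Y.Homotopic sE sF u u c (q ++ c' ++ Y.revW q)

/-- `c` is a shortest representative of its free homotopy class. -/
def ShortestRep (sE : Set Y.E) (sF : Set Y.F) (c : List Y.D) : Prop :=
  ∀ c', Y.FreelyHomotopic sE sF c c' → c.length ≤ c'.length

end Complex

/-- `s` occurs as a contiguous subword of the cyclic word `c`. -/
def cycContains {α : Type*} (c s : List α) : Prop :=
  s ≠ [] ∧ s.length ≤ c.length ∧ s <:+: (c ++ c)

namespace Complex

variable {g : ℕ} (Y : Complex g)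

/-- The cycle `c` contains no long block and no long chain. -/
def NoLongBlockOrChainCyc (c : List Y.D) : Prop :=
  (∀ s, cycContains c s → ¬ (Y.IsBlock s ∧ 2 * g + 1 ≤ s.length)) ∧
  (∀ bs, Y.IsLongChain bs → ¬ cycContains c bs.flatten)

/-- A (cyclically) non-backtracking cycle. -/
def NonBacktrackingCyc (c : List Y.D) : Prop :=
  ¬ ∃ d : Y.D, cycContains c [d, Y.dRev d]

/-- A cycle which is essential and a shortest representative of its
free homotopy class. -/
def GoodCycle (c : List Y.D) : Prop :=
  Y.IsCycle c ∧ Y.Essential Set.univ Set.univ c ∧ Y.ShortestRep Set.univ Set.univ c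

/-! ### Cells and components of complements -/

/-- The cells of a complex. -/
def Cell := Y.V ⊕ Y.E ⊕ Y.F

def vCell (v : Y.V) : Y.Cell := Sum.inl v
def eCell (e : Y.E) : Y.Cell := Sum.inr (Sum.inl e)
def fCell (f : Y.F) : Y.Cell := Sum.inr (Sum.inr f)

/-- Basic incidence of (open) cells. -/
def inc0 : Y.Cell → Y.Cell → Prop := fun c c' =>
  match c, c' with
  | Sum.inl v, Sum.inr (Sum.inl e) => Y.src e = v ∨ Y.dst e = v
  | Sum.inl v, Sum.inr (Sum.inr f) => ∃ d ∈ Y.bdry f, Y.dTail d = v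
  | Sum.inr (Sum.inl e), Sum.inr (Sum.inr f) => ∃ b, (e, b) ∈ Y.bdry f
  | _, _ => False

/-- Symmetrized incidence of cells. -/
def incid (c c' : Y.Cell) : Prop := Y.inc0 c c' ∨ Y.inc0 c' c

end Complex

/-- A triple of subsets of the cells of a complex `Y` (a prospective subcomplex). -/
structure SubC {g : ℕ} (Y : Complex g) where
  sV : Set Y.V
  sE : Set Y.E
  sF : Set Y.F

namespace SubC

variable {g : ℕ} {Y : Complex g}

/-- `S` is an actual subcomplex: closed under taking boundaries of cells. -/
def IsSub (S : SubC Y) : Prop :=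
  (∀ e ∈ S.sE, Y.src e ∈ S.sV ∧ Y.dst e ∈ S.sV) ∧
  (∀ f ∈ S.sF, ∀ d ∈ Y.bdry f, d.1 ∈ S.sE)

/-- Containment of subcomplexes. -/
def le (S T : SubC Y) : Prop := S.sV ⊆ T.sV ∧ S.sE ⊆ T.sE ∧ S.sF ⊆ T.sF

/-- Compactness: finitely many cells. -/
def Compact (S : SubC Y) : Prop := S.sV.Finite ∧ S.sE.Finite ∧ S.sF.Finite

/-- Connectivity of the subcomplex. -/
def Connected (S : SubC Y) : Prop :=
  S.sV.Nonempty ∧ ∀ v ∈ S.sV, ∀ w ∈ S.sV, ∃ l, Y.WalkFrom v w l ∧ Y.InSet S.sE l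

/-- Image of a subcomplex under a morphism. -/
def image {Z : Complex g} (φ : Hom Y Z) (S : SubC Y) : SubC Z :=
  ⟨φ.mV '' S.sV, φ.mE '' S.sE, φ.mF '' S.sF⟩

end SubC

/-- The whole complex, as a subcomplex of itself. -/
def fullSub {g : ℕ} (Y : Complex g) : SubC Y := ⟨Set.univ, Set.univ, Set.univ⟩

namespace Complex

variable {g : ℕ} (Y : Complex g)

/-- Membership of a cell in a subcomplex. -/
def inSub (S : SubC Y) : Y.Cell → Prop := fun c =>
  match c with
  | Sum.inl v => v ∈ S.sV
  | Sum.inr (Sum.inl e) => e ∈ S.sE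
  | Sum.inr (Sum.inr f) => f ∈ S.sF

/-- Reachability of cells through the open complement of the subcomplex `S`
(= lying in the same connected component of the complement). -/
def reachS (S : SubC Y) (c c' : Y.Cell) : Prop :=
  Relation.ReflTransGen (fun a b => Y.incid a b ∧ ¬ Y.inSub S a ∧ ¬ Y.inSub S b) c c'

end Complex

/-- The closure (as a subcomplex) of the connected component of the cell `c₀` in the
complement of the subcomplex `S`. -/
def compCl {g : ℕ} (Y : Complex g) (S : SubC Y) (c₀ : Y.Cell) : SubC Y :=
  let cF : Set Y.F := {f | Y.reachS S c₀ (Y.fCell f)}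
  let cE : Set Y.E :=
    {e | Y.reachS S c₀ (Y.eCell e)} ∪ {e | ∃ f ∈ cF, ∃ b, (e, b) ∈ Y.bdry f}
  let cV : Set Y.V :=
    {v | Y.reachS S c₀ (Y.vCell v)} ∪ {v | ∃ e ∈ cE, Y.src e = v ∨ Y.dst e = v}
  ⟨cV, cE, cF⟩

/-- The subcomplex has exactly one boundary cycle (which covers all boundary darts). -/
def OneBdry {g : ℕ} (Y : Complex g) (S : SubC Y) : Prop :=
  ∃ δ, Y.BCycle S.sE S.sF δ ∧ ∀ d, Y.IsBDart S.sE S.sF d → d ∈ δ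

/-- The subcomplex has exactly two (disjoint) boundary cycles, covering all
boundary darts. -/
def TwoBdry {g : ℕ} (Y : Complex g) (S : SubC Y) : Prop :=
  ∃ δ₁ δ₂, Y.BCycle S.sE S.sF δ₁ ∧ Y.BCycle S.sE S.sF δ₂ ∧ δ₁.Disjoint δ₂ ∧
    ∀ d, Y.IsBDart S.sE S.sF d → d ∈ δ₁ ∨ d ∈ δ₂

/-- The boundary-reduced closure of `S` inside `Y`: the intersection of all
intermediate boundary reduced subcomplexes. -/
def BRcl {g : ℕ} (Y : Complex g) (S : SubC Y) : SubC Y where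
  sV := ⋂ T ∈ {T : SubC Y | T.IsSub ∧ S.le T ∧ Y.BoundaryReduced T.sE T.sF}, T.sV
  sE := ⋂ T ∈ {T : SubC Y | T.IsSub ∧ S.le T ∧ Y.BoundaryReduced T.sE T.sF}, T.sE
  sF := ⋂ T ∈ {T : SubC Y | T.IsSub ∧ S.le T ∧ Y.BoundaryReduced T.sE T.sF}, T.sF

/-- The strongly-boundary-reduced closure of `S` inside `Y`. -/
def SBRcl {g : ℕ} (Y : Complex g) (S : SubC Y) : SubC Y where
  sV := ⋂ T ∈ {T : SubC Y | T.IsSub ∧ S.le T ∧ Y.StronglyBoundaryReduced T.sE T.sF}, T.sV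
  sE := ⋂ T ∈ {T : SubC Y | T.IsSub ∧ S.le T ∧ Y.StronglyBoundaryReduced T.sE T.sF}, T.sE
  sF := ⋂ T ∈ {T : SubC Y | T.IsSub ∧ S.le T ∧ Y.StronglyBoundaryReduced T.sE T.sF}, T.sF

/-- An isomorphism between the subcomplex `S` of `Y` and the subcomplex `T` of `Z`. -/
structure SubEquiv {g : ℕ} (Y : Complex g) (S : SubC Y) (Z : Complex g) (T : SubC Z) where
  fV : Y.V → Z.V
  fE : Y.E → Z.E
  fF : Y.F → Z.F
  bijV : Set.BijOn fV S.sV T.sV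
  bijE : Set.BijOn fE S.sE T.sE
  bijF : Set.BijOn fF S.sF T.sF
  hsrc : ∀ e ∈ S.sE, Z.src (fE e) = fV (Y.src e)
  hdst : ∀ e ∈ S.sE, Z.dst (fE e) = fV (Y.dst e)
  hlab : ∀ e ∈ S.sE, Z.lab (fE e) = Y.lab e
  hbdry : ∀ f ∈ S.sF, Z.bdry (fF f) = (Y.bdry f).map fun d => (fE d.1, d.2)

/-- `FunnelComponent Y S c₀`: the connected component of the cell `c₀` in the
complement of the subcomplex `S` is a twice-punctured sphere with one funnel and
one fake-puncture.  Rendered combinatorially: the component contains infinitely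
many `4g`-gons (the funnel); there is a boundary cycle `δ` of `S` adjacent to the
component, it is unique (one fake-puncture), and every closed walk inside the
closure of the component is freely homotopic there to a power of `δ` or of its
inverse (so the closure is a half-open annulus bounded by `δ`). -/
def FunnelComponent {g : ℕ} (Y : Complex g) (S : SubC Y) (c₀ : Y.Cell) : Prop :=
  {f : Y.F | Y.reachS S c₀ (Y.fCell f)}.Infinite ∧
  ∃ δ : List Y.D, Y.BCycle S.sE S.sF δ ∧
    (∃ d ∈ δ, ∃ c', Y.incid (Y.eCell d.1) c' ∧ Y.reachS S c₀ c') ∧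
    (∀ δ', Y.BCycle S.sE S.sF δ' →
      (∃ d ∈ δ', ∃ c', Y.incid (Y.eCell d.1) c' ∧ Y.reachS S c₀ c') →
      ∃ n, δ' = δ.rotate n) ∧
    (∀ (v : Y.V) (l : List Y.D), Y.WalkFrom v v l →
      Y.InSet ({e | Y.reachS S c₀ (Y.eCell e)} ∪ {e | ∃ b, (e, b) ∈ δ}) l →
      ∃ n,
        Y.FreelyHomotopic ({e | Y.reachS S c₀ (Y.eCell e)} ∪ {e | ∃ b, (e, b) ∈ δ})
          {f | Y.reachS S c₀ (Y.fCell f)} l ((List.replicate n δ).flatten) ∨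
        Y.FreelyHomotopic ({e | Y.reachS S c₀ (Y.eCell e)} ∪ {e | ∃ b, (e, b) ∈ δ})
          {f | Y.reachS S c₀ (Y.fCell f)} l ((List.replicate n (Y.revW δ)).flatten))

/-- `Y` contains a funnel: an essential cycle `δ` of `Y` cutting off an infinite
region of `Y` which is attached to the rest of `Y` only along `δ`, contains no
boundary of `Y`, and is a half-open annulus (every loop inside is freely homotopic
to a power of `δ`); i.e. an end of `Y` which is a puncture of the ambient covering. -/
def HasFunnel {g : ℕ} (Y : Complex g) : Prop :=
  ∃ (δ : List Y.D) (sE : Set Y.E) (sF : Set Y.F),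
    Y.IsCycle δ ∧ Y.Essential Set.univ Set.univ δ ∧
    (∀ d ∈ δ, d.1 ∉ sE) ∧ sE.Nonempty ∧ sF.Infinite ∧
    (∀ f ∈ sF, ∀ d ∈ Y.bdry f, d.1 ∈ sE ∨ ∃ b, (d.1, b) ∈ δ) ∧
    (∀ f : Y.F, (∃ d ∈ Y.bdry f, d.1 ∈ sE) → f ∈ sF) ∧
    (∀ d : Y.D, d.1 ∈ sE → ¬ Y.IsBDart Set.univ Set.univ d) ∧
    (∀ v : Y.V, (∃ e ∈ sE, Y.src e = v ∨ Y.dst e = v) → (∀ d ∈ δ, Y.dTail d ≠ v) →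
      ∀ e' : Y.E, (Y.src e' = v ∨ Y.dst e' = v) → e' ∈ sE) ∧
    (∀ (v : Y.V) (l : List Y.D), Y.WalkFrom v v l →
      Y.InSet (sE ∪ {e | ∃ b, (e, b) ∈ δ}) l →
      ∃ n,
        Y.FreelyHomotopic (sE ∪ {e | ∃ b, (e, b) ∈ δ}) sF l
          ((List.replicate n δ).flatten) ∨
        Y.FreelyHomotopic (sE ∪ {e | ∃ b, (e, b) ∈ δ}) sF l
          ((List.replicate n (Y.revW δ)).flatten))

/-- The fundamental group of `Y` is cyclic: some closed walk `c` generates all free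
homotopy classes of loops.  (For a connected surface this is *equivalent to NOT
having genus ≥ 1 or at least 3 boundary components/punctures*.) -/
def CyclicPi1 {g : ℕ} (Y : Complex g) : Prop :=
  ∃ c : List Y.D, ∀ (v : Y.V) (l : List Y.D), Y.WalkFrom v v l →
    ∃ n,
      Y.FreelyHomotopic Set.univ Set.univ l ((List.replicate n c).flatten) ∨
      Y.FreelyHomotopic Set.univ Set.univ l ((List.replicate n (Y.revW c)).flatten)

/-! ### The covering space `J\~Σ_g` and the core surface of `J` -/

/-- Right cosets `Jx` of `J` in `Γ_g` — the vertices (and faces) of `J\~Σ_g`. -/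
abbrev Cos (g : ℕ) (J : Subgroup (Gamma g)) := Quotient (QuotientGroup.rightRel J)

/-- The coset `Jx`. -/
def mkCos (g : ℕ) (J : Subgroup (Gamma g)) (x : Gamma g) : Cos g J :=
  Quotient.mk _ x

/-- Right multiplication on right cosets. -/
def rmul (g : ℕ) (J : Subgroup (Gamma g)) (x : Gamma g) : Cos g J → Cos g J :=
  Quotient.map (· * x) (by
    intro a b hab
    have h1 : b * a⁻¹ ∈ J := QuotientGroup.rightRel_apply.mp hab
    refine QuotientGroup.rightRel_apply.mpr ?_
    have h2 : b * x * (a * x)⁻¹ = b * a⁻¹ := by group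
    rw [h2]; exact h1)

/-- The walk in `J\~Σ_g` starting at a vertex and reading a given word. -/
def relWalk (g : ℕ) (J : Subgroup (Gamma g)) :
    Cos g J → List (Letter g) → List ((Cos g J × Fin (2 * g)) × Bool)
  | _, [] => []
  | v, (ℓ, true) :: w =>
      ((v, ℓ), true) :: relWalk g J (rmul g J (PresentedGroup.of ℓ) v) w
  | v, (ℓ, false) :: w =>
      ((rmul g J (PresentedGroup.of ℓ)⁻¹ v, ℓ), false) ::
        relWalk g J (rmul g J (PresentedGroup.of ℓ)⁻¹ v) w

/-- The covering space `Υ = J\~Σ_g` of `Σ_g` corresponding to the subgroup `J`,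
with the CW-structure pulled back from `Σ_g`: vertices and `4g`-gons are the right
cosets of `J`, and each vertex carries one outgoing edge per label. -/
def cover (g : ℕ) (J : Subgroup (Gamma g)) : Complex g where
  V := Cos g J
  E := Cos g J × Fin (2 * g)
  F := Cos g J
  src e := e.1
  dst e := rmul g J (PresentedGroup.of e.2) e.1
  lab e := e.2
  bdry v := relWalk g J v (relatorWord g)

/-- The map `J₁\~Σ_g → J₂\~Σ_g` on vertices, for `J₁ ≤ J₂`. -/
def coverMapV {g : ℕ} {J₁ J₂ : Subgroup (Gamma g)} (h : J₁ ≤ J₂) :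
    Cos g J₁ → Cos g J₂ :=
  Quotient.map id (by
    intro a b hab
    have h1 : b * a⁻¹ ∈ J₁ := QuotientGroup.rightRel_apply.mp hab
    exact QuotientGroup.rightRel_apply.mpr (h h1))

/-- The natural covering morphism on edges. -/
def coverMapE {g : ℕ} {J₁ J₂ : Subgroup (Gamma g)} (h : J₁ ≤ J₂)
    (e : (cover g J₁).E) : (cover g J₂).E :=
  (coverMapV h e.1, e.2)

/-- The natural covering morphism on darts. -/
def coverMapD {g : ℕ} {J₁ J₂ : Subgroup (Gamma g)} (h : J₁ ≤ J₂)
    (d : (cover g J₁).D) : (cover g J₂).D :=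
  (coverMapE h d.1, d.2)

/-- The cycle `c` in `J\~Σ_g` represents the conjugacy class of `γ` in `J`
(conjugacy classes in `J` ↔ free homotopy classes of essential loops in `J\~Σ_g`). -/
def RepCls {g : ℕ} (J : Subgroup (Gamma g)) (c : List ((cover g J).D))
    (γ : Gamma g) : Prop :=
  ∃ x j : Gamma g, j ∈ J ∧
    (cover g J).WalkFrom (mkCos g J x) (mkCos g J x) c ∧
    x * wordG ((cover g J).wordOf c) * x⁻¹ = j * γ * j⁻¹

/-- Step (i) of the definition of the core surface: the edges lying on some
shortest representative cycle of an essential free homotopy class. -/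
def coreE1 (g : ℕ) (J : Subgroup (Gamma g)) : Set (cover g J).E :=
  {e | ∃ c, (cover g J).GoodCycle c ∧ ∃ b, (e, b) ∈ c}

/-- The vertices of step (i) of the definition of the core surface. -/
def coreV1 (g : ℕ) (J : Subgroup (Gamma g)) : Set (cover g J).V :=
  {v | ∃ e ∈ coreE1 g J, (cover g J).src e = v ∨ (cover g J).dst e = v}

/-- Step (i) of the definition of the core surface, as a subcomplex of `J\~Σ_g`. -/
def coreS1 (g : ℕ) (J : Subgroup (Gamma g)) : SubC (cover g J) :=
  ⟨coreV1 g J, coreE1 g J, ∅⟩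

/-- A cell of `J\~Σ_g` lying in a connected component of the complement of step (i)
which contains only finitely many `4g`-gons. -/
def coreFin (g : ℕ) (J : Subgroup (Gamma g)) (c : (cover g J).Cell) : Prop :=
  ¬ (cover g J).inSub (coreS1 g J) c ∧
  {f : (cover g J).F | (cover g J).reachS (coreS1 g J) c ((cover g J).fCell f)}.Finite

open Classical in
/-- The core surface `Core(J)` of a subgroup `J ≤ Γ_g`, as a subcomplex of
`Υ = J\~Σ_g`: (i) the union of all shortest representative cycles of essential
free homotopy classes in `Υ`, together with (ii) all connected components of the
complement containing finitely many `4g`-gons.  For the trivial subgroup it is a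
single vertex. -/
def coreSub (g : ℕ) (J : Subgroup (Gamma g)) : SubC (cover g J) :=
  if J = ⊥ then ⟨{mkCos g J 1}, ∅, ∅⟩
  else
    ⟨coreV1 g J ∪ {v | coreFin g J ((cover g J).vCell v)},
     coreE1 g J ∪ {e | coreFin g J ((cover g J).eCell e)},
     {f | coreFin g J ((cover g J).fCell f)}⟩

/-!
If `T` is a strongly boundary reduced subcomplex of `Z₂`, then its preimage in `Z₁` is strongly
boundary reduced, which gives the inclusion of closures. Indeed, as `Z₁` is strongly boundary
reduced, every half-block and every half-chain of `Z₁` has `4g`-gons of `Z₁` to its left all along: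
a half-chain without them would be a boundary cycle of `Z₁`, and a half-chain in which only some
blocks have them would yield a half-block on the boundary of `Z₁`, obtained by prefixing a block
with the reversed next edge of the `4g`-gon before it. Where a `4g`-gon lies to the left, a boundary
step of the preimage of `T` maps to a boundary step of `T`, so a half-block or a half-chain on the
boundary of the preimage would map to one on the boundary of `T`.
-/

/-! ### Lists and cyclic lists -/

section Lists

variable {α : Type*} {r s : α → α → Prop}

theorem isChain_and {l : List α} :
    l.IsChain (fun a b ↦ r a b ∧ s a b) ↔ l.IsChain r ∧ l.IsChain s := by
  simp only [List.isChain_iff_getElem, forall_and]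

theorem cycleChain_and {c : Cycle α} :
    c.Chain (fun a b ↦ r a b ∧ s a b) ↔ c.Chain r ∧ c.Chain s := by
  induction c with
  | nil => simp
  | cons a l => exact isChain_and

theorem cycleChain_imp_of_mem {c : Cycle α} (H : ∀ a ∈ c, ∀ b ∈ c, r a b → s a b)
    (h : c.Chain r) : c.Chain s :=
  (cycleChain_and.2 ⟨h, Cycle.chain_of_pairwise H⟩).imp fun _ _ hab ↦ hab.2 hab.1

theorem cycleChain_coe_iff {l : List α} :
    (l : Cycle α).Chain r ↔ l.IsChain r ∧ ∀ᵉ (x ∈ l.getLast?) (y ∈ l.head?), r x y := by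
  cases l with
  | nil => simp
  | cons a l =>
    rw [Cycle.chain_coe_cons, ← List.cons_append, List.isChain_append]
    simp

theorem cycleChain_coe_iff_of_ne_nil {l : List α} (hl : l ≠ []) :
    (l : Cycle α).Chain r ↔
      l.IsChain r ∧ ∃ x y, l.getLast? = some x ∧ l.head? = some y ∧ r x y := by
  rw [cycleChain_coe_iff, List.getLast?_eq_some_getLast hl, List.head?_eq_some_head hl]
  simp

theorem cycleChain_flatten {L : List (List α)} (hL : [] ∉ L) :
    (L.flatten : Cycle α).Chain r ↔ (∀ l ∈ L, l.IsChain r) ∧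
      (L : Cycle (List α)).Chain (fun l₁ l₂ ↦ ∀ᵉ (x ∈ l₁.getLast?) (y ∈ l₂.head?), r x y) := by
  have hlast : ∀ x, x ∈ L.flatten.getLast? ↔ ∃ l ∈ L.getLast?, x ∈ l.getLast? := by
    rcases L.eq_nil_or_concat with rfl | ⟨L, l, rfl⟩
    · simp
    · have hl : l ≠ [] := by rintro rfl; simp at hL
      simp [List.getLast?_append_of_ne_nil _ hl]
  have hhead : ∀ x, x ∈ L.flatten.head? ↔ ∃ l ∈ L.head?, x ∈ l.head? := by
    cases L with
    | nil => simp
    | cons l L =>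
      have hl : l ≠ [] := by rintro rfl; simp at hL
      simp [List.head?_append_of_ne_nil _ hl]
  rw [cycleChain_coe_iff, cycleChain_coe_iff, List.isChain_flatten hL, and_assoc]
  simp only [hlast, hhead]
  refine and_congr_right fun _ ↦ and_congr_right fun _ ↦
    ⟨fun h l hl l' hl' x hx y hy ↦ h x ⟨l, hl, hx⟩ y ⟨l', hl', hy⟩, ?_⟩
  rintro h x ⟨l, hl, hx⟩ y ⟨l', hl', hy⟩
  exact h l hl l' hl' x hx y hy

theorem exists_pair_infix_append_self_left {l : List α} {a : α} (ha : a ∈ l) :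
    ∃ b, [a, b] <:+: l ++ l := by
  obtain ⟨s, t, rfl⟩ := List.append_of_mem ha
  obtain ⟨b, u, hu⟩ := List.exists_cons_of_ne_nil (l := t ++ (s ++ a :: t)) (by simp)
  exact ⟨b, s, u, by simp [← hu]⟩

theorem exists_pair_infix_append_self_right {l : List α} {b : α} (hb : b ∈ l) :
    ∃ a, [a, b] <:+: l ++ l := by
  obtain ⟨s, t, rfl⟩ := List.append_of_mem hb
  obtain ⟨u, a, hu⟩ := (List.eq_nil_or_concat (s ++ b :: t ++ s)).resolve_left (by simp)
  exact ⟨a, u, t, by simpa using congrArg (· ++ b :: t) hu.symm⟩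

end Lists

/-! ### Half-edges at a vertex and the relator -/

section Letters

variable {g : ℕ} {s s' t t' : Letter g}

theorem posArr_lt (s : Letter g) : posArr s < 4 * g := by
  obtain ⟨⟨l, hl⟩, b⟩ := s
  simp only [posArr, posIn, posOut]
  split_ifs <;> omega

theorem posArr_not (l : Fin (2 * g)) (b : Bool) :
    posArr ((l, !b) : Letter g) = posLv (l, b) := by
  cases b <;> simp [posArr, posLv]

theorem posLv_lt (s : Letter g) : posLv s < 4 * g :=
  posArr_not s.1 s.2 ▸ posArr_lt _

theorem posArr_injective : Function.Injective (posArr : Letter g → ℕ) := by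
  rintro ⟨⟨l, hl⟩, b⟩ ⟨⟨m, hm⟩, c⟩ h
  simp only [posArr, posIn, posOut] at h
  grind

theorem posLv_injective : Function.Injective (posLv : Letter g → ℕ) := by
  rintro ⟨l, b⟩ ⟨m, c⟩ h
  rw [← posArr_not, ← posArr_not] at h
  simpa using posArr_injective h

theorem posArr_add_gapN_modEq (s t : Letter g) :
    posArr s + 1 + gapN s t ≡ posLv t [MOD 4 * g] := by
  have hs := posArr_lt s
  calc posArr s + 1 + gapN s t
      ≡ posArr s + 1 + (posLv t + 4 * g - (posArr s + 1)) [MOD 4 * g] :=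
        (Nat.mod_modEq _ _).add_left _
    _ = posLv t + 4 * g := by omega
    _ ≡ posLv t [MOD 4 * g] := Nat.add_modulus_modEq_iff.2 rfl

theorem gapN_eq_iff {k : ℕ} (hk : k < 4 * g) :
    gapN s t = k ↔ posArr s + 1 + k ≡ posLv t [MOD 4 * g] := by
  refine ⟨fun h ↦ h ▸ posArr_add_gapN_modEq s t, fun h ↦ ?_⟩
  exact (((posArr_add_gapN_modEq s t).trans h.symm).add_left_cancel' _).eq_of_lt_of_lt
    (Nat.mod_lt _ (by omega)) hk

theorem eq_of_gapN_left (h : gapN s t = gapN s t') : t = t' :=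
  posLv_injective <| (((posArr_add_gapN_modEq s t).symm.trans
    (h ▸ posArr_add_gapN_modEq s t')).eq_of_lt_of_lt (posLv_lt t) (posLv_lt t'))

theorem eq_of_gapN_right (h : gapN s t = gapN s' t) : s = s' := by
  have hmod := (posArr_add_gapN_modEq s t).trans (posArr_add_gapN_modEq s' t).symm
  rw [h] at hmod
  exact posArr_injective <| ((hmod.add_right_cancel' _).add_right_cancel' _).eq_of_lt_of_lt
    (posArr_lt s) (posArr_lt s')

theorem gapN_not_eq_zero {l : Fin (2 * g)} {b : Bool} (h : gapN s t = gapN s (l, b) + 1) :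
    gapN (l, !b) t = 0 := by
  rw [gapN_eq_iff (by have := posArr_lt s; omega), posArr_not]
  have hmod := posArr_add_gapN_modEq s t
  rw [h, ← add_assoc] at hmod
  exact ((posArr_add_gapN_modEq s (l, b)).symm.add_right 1).trans hmod

theorem relatorWord_nodup (g : ℕ) : (relatorWord g).Nodup := by
  refine (List.nodup_finRange _).map ?_
  rintro ⟨p, hp⟩ ⟨q, hq⟩ h
  simp only [relLabel, relSign, Prod.mk.injEq, Fin.mk.injEq, decide_eq_decide] at h ⊢
  omega

theorem length_relatorWord (g : ℕ) : (relatorWord g).length = 4 * g := by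
  simp [relatorWord]

theorem posArr_relator (p : Fin (4 * g)) :
    posArr (relLabel g p, relSign g p) =
      if (p : ℕ) % 4 = 0 then (p : ℕ) + 2 else if (p : ℕ) % 4 = 2 then (p : ℕ) - 2 else p := by
  simp only [posArr, posIn, posOut, relLabel, relSign, decide_eq_true_eq]
  grind

theorem posLv_relator (p : Fin (4 * g)) :
    posLv (relLabel g p, relSign g p) =
      if (p : ℕ) % 4 = 1 then (p : ℕ) + 2 else if (p : ℕ) % 4 = 3 then (p : ℕ) - 2 else p := by
  simp only [posLv, posIn, posOut, relLabel, relSign, decide_eq_true_eq]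
  grind

theorem gapN_relator {p q : Fin (4 * g)}
    (h : (p : ℕ) + 1 = q ∨ (p : ℕ) + 1 = 4 * g ∧ (q : ℕ) = 0) :
    gapN (relLabel g p, relSign g p) (relLabel g q, relSign g q) = 0 := by
  have hpos : posArr (relLabel g p, relSign g p) + 1 = posLv (relLabel g q, relSign g q) ∨
      posArr (relLabel g p, relSign g p) + 1 = 4 * g ∧
        posLv (relLabel g q, relSign g q) = 0 := by
    rw [posArr_relator, posLv_relator]
    grind
  rw [gapN_eq_iff (by omega)]
  rcases hpos with hpos | ⟨hpos, hzero⟩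
  · exact hpos ▸ rfl
  · rw [hzero, add_zero, hpos]
    exact Nat.modEq_zero_iff_dvd.2 dvd_rfl

theorem isChain_relatorWord_append_self (g : ℕ) :
    (relatorWord g ++ relatorWord g).IsChain (gapN · · = 0) := by
  have hchain : (relatorWord g).IsChain (gapN · · = 0) := by
    refine (List.isChain_map _).2 (List.isChain_iff_getElem.2 fun i hi ↦ gapN_relator ?_)
    simp
  refine hchain.append hchain fun s hs t ht ↦ ?_
  rw [List.getLast?_eq_getElem?, length_relatorWord] at hs
  rw [List.head?_eq_getElem?] at ht
  obtain ⟨hp, rfl⟩ := List.getElem?_eq_some_iff.1 hs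
  obtain ⟨hq, rfl⟩ := List.getElem?_eq_some_iff.1 ht
  simp only [relatorWord, List.getElem_map]
  have hpos := length_relatorWord g ▸ hp
  exact gapN_relator (Or.inr (by
    simp only [List.getElem_finRange, Fin.cast_mk, and_true]
    omega))

end Letters

/-! ### Walks, block steps and faces -/

namespace Complex

variable {g : ℕ} {Y : Complex g}

theorem walkFrom_nil_iff {u v : Y.V} : Y.WalkFrom u v [] ↔ u = v :=
  ⟨by rintro ⟨⟩; rfl, by rintro rfl; exact .nil _⟩

theorem walkFrom_cons_iff {u v : Y.V} {d : Y.D} {l : List Y.D} :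
    Y.WalkFrom u v (d :: l) ↔ Y.dTail d = u ∧ Y.WalkFrom (Y.dHead d) v l :=
  ⟨by rintro ⟨⟩; exact ⟨rfl, ‹_›⟩, by rintro ⟨rfl, h⟩; exact .cons d h⟩

theorem walkFrom_append_iff {u v : Y.V} {l l' : List Y.D} :
    Y.WalkFrom u v (l ++ l') ↔ ∃ w, Y.WalkFrom u w l ∧ Y.WalkFrom w v l' := by
  induction l generalizing u with
  | nil => simp [walkFrom_nil_iff]
  | cons d l ih => simp [walkFrom_cons_iff, ih, and_assoc]

theorem WalkFrom.isChain_adj {u v : Y.V} {l : List Y.D} (h : Y.WalkFrom u v l) :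
    l.IsChain Y.adj := by
  induction h with
  | nil => exact .nil
  | @cons d v l hl ih =>
    refine List.isChain_cons.2 ⟨fun d' hd' ↦ ?_, ih⟩
    obtain ⟨l', rfl⟩ := List.head?_eq_some_iff.1 hd'
    exact (walkFrom_cons_iff.1 hl).1.symm

theorem P1.eq_of_dTail_eq (hP1 : Y.P1) {d d' : Y.D} (htail : Y.dTail d = Y.dTail d')
    (hlet : Y.dLet d = Y.dLet d') : d = d' := by
  obtain ⟨e, b⟩ := d
  obtain ⟨e', b'⟩ := d'
  obtain ⟨hlab, rfl⟩ := Prod.mk.inj hlet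
  cases b
  · exact Prod.ext (hP1.2 e e' htail hlab) rfl
  · exact Prod.ext (hP1.1 e e' htail hlab) rfl

theorem P1.eq_of_dHead_eq (hP1 : Y.P1) {d d' : Y.D} (hhead : Y.dHead d = Y.dHead d')
    (hlet : Y.dLet d = Y.dLet d') : d = d' := by
  obtain ⟨e, b⟩ := d
  obtain ⟨e', b'⟩ := d'
  obtain ⟨hlab, rfl⟩ := Prod.mk.inj hlet
  cases b
  · exact Prod.ext (hP1.1 e e' hhead hlab) rfl
  · exact Prod.ext (hP1.2 e e' hhead hlab) rfl

theorem P1.walkFrom_unique (hP1 : Y.P1) {u v v' : Y.V} {l l' : List Y.D}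
    (h : Y.WalkFrom u v l) (h' : Y.WalkFrom u v' l') (hword : Y.wordOf l = Y.wordOf l') :
    l = l' := by
  induction h generalizing l' with
  | nil => exact (List.map_eq_nil_iff.1 hword.symm).symm
  | cons d _ ih =>
    obtain ⟨d', t, rfl, hlet, ht⟩ := List.map_eq_cons_iff.1 hword.symm
    obtain ⟨htail, hwalk⟩ := walkFrom_cons_iff.1 h'
    obtain rfl := hP1.eq_of_dTail_eq htail hlet
    rw [ih hwalk ht.symm]

/-- Two successive darts of a block: no half-edge lies between them at their common
vertex, so that both run along the same `4g`-gon of the ambient covering. -/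
def blockStep (Y : Complex g) (d d' : Y.D) : Prop :=
  Y.adj d d' ∧ gapN (Y.dLet d) (Y.dLet d') = 0

theorem isBlock_iff {l : List Y.D} :
    Y.IsBlock l ↔ l ≠ [] ∧ l.length ≤ 4 * g ∧ l.IsChain Y.blockStep :=
  Iff.rfl

theorem P1.eq_of_adj_of_gapN_eq (hP1 : Y.P1) {d d' d'' : Y.D} (h : Y.adj d d')
    (h' : Y.adj d d'') (hgap : gapN (Y.dLet d) (Y.dLet d') = gapN (Y.dLet d) (Y.dLet d'')) :
    d' = d'' :=
  hP1.eq_of_dTail_eq (h.symm.trans h') (eq_of_gapN_left hgap)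

theorem P1.blockStep_right_unique (hP1 : Y.P1) : Relator.RightUnique Y.blockStep :=
  fun _ _ _ h h' ↦ hP1.eq_of_adj_of_gapN_eq h.1 h'.1 (h.2.trans h'.2.symm)

theorem P1.blockStep_left_unique (hP1 : Y.P1) : Relator.LeftUnique Y.blockStep :=
  fun _ _ _ h h' ↦ hP1.eq_of_dHead_eq (h.1.trans h'.1.symm)
    (eq_of_gapN_right (h.2.trans h'.2.symm))

theorem P3.isChain_bdry_append_self (hP3 : Y.P3) (f : Y.F) :
    (Y.bdry f ++ Y.bdry f).IsChain Y.blockStep := by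
  obtain ⟨⟨v, hv⟩, hword⟩ := hP3.1 f
  refine isChain_and.2 ⟨(walkFrom_append_iff.2 ⟨v, hv, hv⟩).isChain_adj, ?_⟩
  have hletters := isChain_relatorWord_append_self g
  rwa [← hword, wordOf, ← List.map_append, List.isChain_map] at hletters

theorem P3.blockStep_of_infix_bdry (hP3 : Y.P3) {f : Y.F} {d d' : Y.D}
    (h : [d, d'] <:+: Y.bdry f ++ Y.bdry f) : Y.blockStep d d' :=
  List.isChain_pair.1 ((hP3.isChain_bdry_append_self f).infix h)

theorem P3.exists_blockStep_of_mem_bdry (hP3 : Y.P3) {f : Y.F} {d : Y.D} (hd : d ∈ Y.bdry f) :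
    ∃ x, [d, x] <:+: Y.bdry f ++ Y.bdry f ∧ Y.blockStep d x := by
  obtain ⟨x, hx⟩ := exists_pair_infix_append_self_left hd
  exact ⟨x, hx, hP3.blockStep_of_infix_bdry hx⟩

theorem P3.exists_blockStep_to_mem_bdry (hP3 : Y.P3) {f : Y.F} {d : Y.D} (hd : d ∈ Y.bdry f) :
    ∃ x, [x, d] <:+: Y.bdry f ++ Y.bdry f ∧ Y.blockStep x d := by
  obtain ⟨x, hx⟩ := exists_pair_infix_append_self_right hd
  exact ⟨x, hx, hP3.blockStep_of_infix_bdry hx⟩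

/-- A letter occurs only once in the relator, so a dart determines its position on the
boundary of a face, and then the whole boundary walk. -/
theorem eq_of_mem_bdry (hP1 : Y.P1) (hP3 : Y.P3) {f f' : Y.F} {d : Y.D} (hd : d ∈ Y.bdry f)
    (hd' : d ∈ Y.bdry f') : f = f' := by
  obtain ⟨⟨u, hwalk⟩, hword⟩ := hP3.1 f
  obtain ⟨⟨u', hwalk'⟩, hword'⟩ := hP3.1 f'
  refine hP3.2 ?_
  obtain ⟨a, b, hab⟩ := List.append_of_mem hd
  obtain ⟨a', b', hab'⟩ := List.append_of_mem hd'
  rw [hab] at hwalk hword ⊢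
  rw [hab'] at hwalk' hword' ⊢
  obtain ⟨w, ha, hdb⟩ := walkFrom_append_iff.1 hwalk
  obtain ⟨w', ha', hdb'⟩ := walkFrom_append_iff.1 hwalk'
  obtain rfl := (walkFrom_cons_iff.1 hdb).1
  obtain rfl := (walkFrom_cons_iff.1 hdb').1
  obtain ⟨hworda, hwordb⟩ : Y.wordOf a = Y.wordOf a' ∧ Y.wordOf b = Y.wordOf b' := by
    have hnodup := relatorWord_nodup g
    have hcut := hword.trans hword'.symm
    rw [← hword] at hnodup
    simp only [wordOf, List.map_append, List.map_cons] at hnodup hcut ⊢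
    obtain ⟨-, htail, hne⟩ := List.nodup_append.1 hnodup
    have hnotMem_a : Y.dLet d ∉ a.map Y.dLet := fun h ↦ hne _ h _ List.mem_cons_self rfl
    have hnotMem_b := (List.nodup_cons.1 htail).1
    exact ((List.append_cons_inj_of_notMem hnotMem_a hnotMem_b).1 hcut).imp_right And.right
  have hrotate : d :: b ++ a = d :: b' ++ a' :=
    hP1.walkFrom_unique (walkFrom_append_iff.2 ⟨u, hdb, ha⟩)
      (walkFrom_append_iff.2 ⟨u', hdb', ha'⟩) (by
        simp only [wordOf, List.map_append, List.map_cons] at hworda hwordb ⊢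
        rw [hworda, hwordb])
  have hlength : a.length = a'.length := by simpa [wordOf] using congrArg List.length hworda
  obtain ⟨hdb, rfl⟩ := List.append_inj' hrotate hlength
  rw [hdb]

/-- A `4g`-gon of `Y` lies to the immediate left of the dart `d`. -/
def HasFace (Y : Complex g) (d : Y.D) : Prop := ∃ f, d ∈ Y.bdry f

theorem hasFace_of_infix_bdry {f : Y.F} {d d' : Y.D} (h : [d, d'] <:+: Y.bdry f ++ Y.bdry f) :
    Y.HasFace d ∧ Y.HasFace d' := by
  have hsub := h.subset
  simp only [List.cons_subset, List.mem_append, or_self] at hsub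
  exact ⟨⟨f, hsub.1⟩, ⟨f, hsub.2.1⟩⟩

theorem hasFace_iff_of_blockStep (hP1 : Y.P1) (hP3 : Y.P3) {d d' : Y.D}
    (h : Y.blockStep d d') : Y.HasFace d ↔ Y.HasFace d' := by
  constructor
  · rintro ⟨f, hd⟩
    obtain ⟨x, hx, hdx⟩ := hP3.exists_blockStep_of_mem_bdry hd
    exact hP1.blockStep_right_unique hdx h ▸ (hasFace_of_infix_bdry hx).2
  · rintro ⟨f, hd'⟩
    obtain ⟨x, hx, hxd'⟩ := hP3.exists_blockStep_to_mem_bdry hd'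
    exact hP1.blockStep_left_unique hxd' h ▸ (hasFace_of_infix_bdry hx).1

theorem IsBlock.hasFace_of_mem (hP1 : Y.P1) (hP3 : Y.P3) {l : List Y.D} (hl : Y.IsBlock l)
    {d d' : Y.D} (hd : d ∈ l) (hd' : d' ∈ l) (hface : Y.HasFace d) : Y.HasFace d' := by
  let r (x y : Y.D) : Prop := Y.HasFace x ↔ Y.HasFace y
  have : IsTrans Y.D r := ⟨fun _ _ _ ↦ Iff.trans⟩
  have : Std.Symm r := ⟨fun _ _ ↦ Iff.symm⟩
  have hpair : l.Pairwise r :=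
    ((isBlock_iff.1 hl).2.2.imp fun _ _ ↦ hasFace_iff_of_blockStep hP1 hP3).pairwise
  have hall := List.Pairwise.forall_of_forall (R := r) (fun _ _ ↦ Iff.rfl) hpair
  exact (hall hd hd').1 hface

end Complex

/-! ### Half-blocks and half-chains of a strongly boundary reduced complex -/

namespace Complex

variable {g : ℕ} {Y : Complex g}

theorem isCyclicChain_iff {bs : List (List Y.D)} :
    Y.IsCyclicChain bs ↔
      bs ≠ [] ∧ (∀ b ∈ bs, Y.IsBlock b) ∧ (bs : Cycle (List Y.D)).Chain Y.chainStep := by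
  constructor
  · rintro ⟨⟨hne, hblock, hchain⟩, hlast⟩
    exact ⟨hne, hblock, (cycleChain_coe_iff_of_ne_nil hne).2 ⟨hchain, hlast⟩⟩
  · rintro ⟨hne, hblock, hchain⟩
    obtain ⟨hchain, hlast⟩ := (cycleChain_coe_iff_of_ne_nil hne).1 hchain
    exact ⟨⟨hne, hblock, hchain⟩, hlast⟩

theorem bCycle_iff {sE : Set Y.E} {sF : Set Y.F} {l : List Y.D} :
    Y.BCycle sE sF l ↔ l ≠ [] ∧ Y.InSet sE l ∧ (l : Cycle Y.D).Chain (Y.bStep sE sF) := by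
  constructor
  · rintro ⟨⟨hne, hmem, hchain⟩, hlast⟩
    exact ⟨hne, hmem, (cycleChain_coe_iff_of_ne_nil hne).2 ⟨hchain, hlast⟩⟩
  · rintro ⟨hne, hmem, hchain⟩
    obtain ⟨hchain, hlast⟩ := (cycleChain_coe_iff_of_ne_nil hne).1 hchain
    exact ⟨⟨hne, hmem, hchain⟩, hlast⟩

theorem faceStep.hasFace {sF : Set Y.F} {d d' : Y.D} (h : Y.faceStep sF d d') : Y.HasFace d := by
  obtain ⟨f, -, hf⟩ := h
  exact (hasFace_of_infix_bdry hf).1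

theorem bStep_univ_of_blockStep {d d' : Y.D} (h : Y.blockStep d d') (hface : ¬ Y.HasFace d) :
    Y.bStep Set.univ Set.univ d d' :=
  ⟨trivial, ⟨trivial, h.1, fun _ _ _ ↦ h.2 ▸ Nat.zero_le _⟩, fun hf ↦ hface hf.hasFace⟩

theorem StronglyBoundaryReduced.hasFace_of_isBlock (hP1 : Y.P1) (hP3 : Y.P3)
    (hs : Y.StronglyBoundaryReduced Set.univ Set.univ) {l : List Y.D} (hl : Y.IsBlock l)
    (hlength : l.length = 2 * g) {d : Y.D} (hd : d ∈ l) : Y.HasFace d := by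
  by_contra hface
  refine hs.1 l ⟨hl.1, fun _ _ ↦ trivial, ?_⟩ ⟨hl, hlength⟩
  refine (isBlock_iff.1 hl).2.2.imp_of_mem_imp fun x y hx _ hxy ↦ ?_
  exact bStep_univ_of_blockStep hxy fun hx' ↦ hface (hl.hasFace_of_mem hP1 hP3 hx hd hx')

theorem genus_pos_of_dart (d : Y.D) : 0 < g := by
  have := (Y.lab d.1).pos
  omega

theorem StronglyBoundaryReduced.hasFace_of_blockStep (hP1 : Y.P1) (hP3 : Y.P3)
    (hs : Y.StronglyBoundaryReduced Set.univ Set.univ) {b : List Y.D} (hb : Y.IsBlock b)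
    (hlength : b.length = 2 * g - 1) {d x : Y.D} (hd : b.getLast? = some d)
    (hdx : Y.blockStep d x) : Y.HasFace d := by
  have hg := genus_pos_of_dart d
  obtain ⟨-, -, hchain⟩ := isBlock_iff.1 hb
  have hlengthx : (b ++ [x]).length = 2 * g := by
    rw [List.length_append, List.length_singleton]
    omega
  have hbx : Y.IsBlock (b ++ [x]) := by
    refine isBlock_iff.2 ⟨by simp, by omega, List.isChain_append.2 ⟨hchain, .singleton x, ?_⟩⟩
    simpa [hd] using hdx
  exact hs.hasFace_of_isBlock hP1 hP3 hbx hlengthx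
    (List.mem_append_left _ (List.mem_of_getLast? hd))

theorem adj_dRev {d x d' : Y.D} (hdx : Y.adj d x) (hdd' : Y.adj d d') : Y.adj (Y.dRev x) d' := by
  have hrev : Y.dHead (Y.dRev x) = Y.dTail x := by
    obtain ⟨e, b⟩ := x
    cases b <;> rfl
  exact hrev.trans (hdx.symm.trans hdd')

theorem StronglyBoundaryReduced.hasFace_of_chainStep (hP1 : Y.P1) (hP3 : Y.P3)
    (hs : Y.StronglyBoundaryReduced Set.univ Set.univ) {b b' : List Y.D}
    (hstep : Y.chainStep b b') (hb' : Y.IsBlock b') (hlength : b'.length = 2 * g - 1)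
    (hface : ∀ d ∈ b, Y.HasFace d) : ∀ d ∈ b', Y.HasFace d := by
  obtain ⟨d, d', hd, hd', hadj, hgap⟩ := hstep
  have hg := genus_pos_of_dart d
  obtain ⟨f, hf⟩ := hface d (List.mem_of_getLast? hd)
  obtain ⟨x, -, hdx⟩ := hP3.exists_blockStep_of_mem_bdry hf
  have hstep : Y.blockStep (Y.dRev x) d' :=
    ⟨adj_dRev hdx.1 hadj, gapN_not_eq_zero (hgap.trans (congrArg (· + 1) hdx.2.symm))⟩
  obtain ⟨-, -, hchain⟩ := isBlock_iff.1 hb'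
  have hxlength : (Y.dRev x :: b').length = 2 * g := by
    rw [List.length_cons]
    omega
  have hxb' : Y.IsBlock (Y.dRev x :: b') := by
    refine isBlock_iff.2 ⟨by simp, by omega, List.isChain_cons.2 ⟨?_, hchain⟩⟩
    simpa [hd'] using hstep
  exact fun e he ↦ hs.hasFace_of_isBlock hP1 hP3 hxb' hxlength (List.mem_cons_of_mem _ he)

namespace IsHalfChain

variable {bs : List (List Y.D)}

theorem isBlock (h : Y.IsHalfChain bs) : ∀ b ∈ bs, Y.IsBlock b :=
  (isCyclicChain_iff.1 h.1).2.1

theorem chain (h : Y.IsHalfChain bs) : (bs : Cycle (List Y.D)).Chain Y.chainStep :=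
  (isCyclicChain_iff.1 h.1).2.2

theorem nil_notMem (h : Y.IsHalfChain bs) : [] ∉ bs :=
  fun hnil ↦ (h.isBlock _ hnil).1 rfl

theorem flatten_ne_nil (h : Y.IsHalfChain bs) : bs.flatten ≠ [] := by
  obtain ⟨b, hb⟩ := List.exists_mem_of_ne_nil bs h.1.1.1
  exact List.flatten_ne_nil_iff.2 ⟨b, hb, (h.isBlock b hb).1⟩

theorem chain_flatten (h : Y.IsHalfChain bs) {r : Y.D → Y.D → Prop}
    (hblock : ∀ d d', Y.blockStep d d' → r d d')
    (hstep : ∀ b ∈ bs, ∀ d d', b.getLast? = some d → Y.adj d d' →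
      gapN (Y.dLet d) (Y.dLet d') = 1 → r d d') :
    (bs.flatten : Cycle Y.D).Chain r := by
  refine (cycleChain_flatten h.nil_notMem).2
    ⟨fun b hb ↦ (isBlock_iff.1 (h.isBlock b hb)).2.2.imp hblock, ?_⟩
  refine cycleChain_imp_of_mem ?_ h.chain
  rintro b hb b' - ⟨d, d', hd, hd', hadj, hgap⟩ x hx y hy
  obtain rfl := Option.some.inj (hd.symm.trans hx)
  obtain rfl := Option.some.inj (hd'.symm.trans hy)
  exact hstep b hb d d' hd hadj hgap

theorem chain_gapN_le_one (h : Y.IsHalfChain bs) :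
    (bs.flatten : Cycle Y.D).Chain (fun d d' ↦ gapN (Y.dLet d) (Y.dLet d') ≤ 1) :=
  h.chain_flatten (fun _ _ hdd' ↦ hdd'.2.trans_le zero_le_one) fun _ _ _ _ _ _ hgap ↦ hgap.le

theorem chain_bStep_of_not_hasFace (h : Y.IsHalfChain bs) (hP1 : Y.P1) (hP3 : Y.P3)
    (hs : Y.StronglyBoundaryReduced Set.univ Set.univ) :
    (bs.flatten : Cycle Y.D).Chain
      (fun d d' ↦ ¬ Y.HasFace d → Y.bStep Set.univ Set.univ d d') := by
  refine h.chain_flatten (fun _ _ ↦ bStep_univ_of_blockStep) fun b hb d d' hd hadj hgap hface ↦ ?_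
  refine ⟨trivial, ⟨trivial, hadj, fun x _ hx ↦ ?_⟩, fun hf ↦ hface hf.hasFace⟩
  rw [hgap, Nat.one_le_iff_ne_zero]
  exact fun hzero ↦
    hface (hs.hasFace_of_blockStep hP1 hP3 (h.isBlock b hb) (h.2 b hb) hd ⟨hx, hzero⟩)

theorem hasFace_forall_of_exists (h : Y.IsHalfChain bs) (hP1 : Y.P1) (hP3 : Y.P3)
    (hs : Y.StronglyBoundaryReduced Set.univ Set.univ) {d d' : Y.D} (hd : d ∈ bs.flatten)
    (hd' : d' ∈ bs.flatten) (hface : Y.HasFace d) : Y.HasFace d' := by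
  let r (b b' : List Y.D) : Prop := (∀ x ∈ b, Y.HasFace x) → ∀ x ∈ b', Y.HasFace x
  have : IsTrans (List Y.D) r := ⟨fun _ _ _ hab hbc ↦ hbc ∘ hab⟩
  have hchain : (bs : Cycle (List Y.D)).Chain r :=
    cycleChain_imp_of_mem (fun b _ b' hb' hstep ↦
      hs.hasFace_of_chainStep hP1 hP3 hstep (h.isBlock b' hb') (h.2 b' hb')) h.chain
  obtain ⟨b, hb, hdb⟩ := List.mem_flatten.1 hd
  obtain ⟨b', hb', hdb'⟩ := List.mem_flatten.1 hd'
  exact Cycle.chain_iff_pairwise.1 hchain b hb b' hb'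
    (fun x hx ↦ (h.isBlock b hb).hasFace_of_mem hP1 hP3 hdb hx hface) d' hdb'

theorem hasFace (h : Y.IsHalfChain bs) (hP1 : Y.P1) (hP3 : Y.P3)
    (hs : Y.StronglyBoundaryReduced Set.univ Set.univ) {d : Y.D} (hd : d ∈ bs.flatten) :
    Y.HasFace d := by
  by_contra hface
  refine hs.2 bs h (bCycle_iff.2 ⟨h.flatten_ne_nil, fun _ _ ↦ trivial, ?_⟩)
  refine cycleChain_imp_of_mem (fun x hx _ _ hxy ↦ hxy fun hx' ↦ ?_)
    (h.chain_bStep_of_not_hasFace hP1 hP3 hs)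
  exact hface (h.hasFace_forall_of_exists hP1 hP3 hs hx hd hx')

end IsHalfChain

end Complex

/-! ### Morphisms and preimages -/

namespace Hom

variable {g : ℕ} {Y Z : Complex g} (φ : Hom Y Z)

theorem dLet_mD (d : Y.D) : Z.dLet (φ.mD d) = Y.dLet d :=
  Prod.ext (φ.hlab d.1) rfl

theorem dTail_mD (d : Y.D) : Z.dTail (φ.mD d) = φ.mV (Y.dTail d) := by
  obtain ⟨e, b⟩ := d
  cases b
  · exact φ.hdst e
  · exact φ.hsrc e

theorem dHead_mD (d : Y.D) : Z.dHead (φ.mD d) = φ.mV (Y.dHead d) := by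
  obtain ⟨e, b⟩ := d
  cases b
  · exact φ.hsrc e
  · exact φ.hdst e

theorem bdry_mF (f : Y.F) : Z.bdry (φ.mF f) = (Y.bdry f).map φ.mD :=
  φ.hbdry f

theorem mD_mem_bdry {f : Y.F} {d : Y.D} (hd : d ∈ Y.bdry f) : φ.mD d ∈ Z.bdry (φ.mF f) :=
  φ.bdry_mF f ▸ List.mem_map_of_mem hd

theorem adj_mD {d d' : Y.D} (h : Y.adj d d') : Z.adj (φ.mD d) (φ.mD d') := by
  rw [Complex.adj, dHead_mD, dTail_mD, h]

theorem wordOf_map (l : List Y.D) : Z.wordOf (l.map φ.mD) = Y.wordOf l := by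
  simp [Complex.wordOf, Function.comp_def, dLet_mD]

theorem walkFrom_map_iff (hφ : Function.Injective φ.mV) {u v : Y.V} {l : List Y.D} :
    Z.WalkFrom (φ.mV u) (φ.mV v) (l.map φ.mD) ↔ Y.WalkFrom u v l := by
  induction l generalizing u with
  | nil => simp [Complex.walkFrom_nil_iff, hφ.eq_iff]
  | cons d l ih => simp [Complex.walkFrom_cons_iff, dTail_mD, dHead_mD, hφ.eq_iff, ih]

theorem isBlock_map {l : List Y.D} (h : Y.IsBlock l) : Z.IsBlock (l.map φ.mD) := by
  obtain ⟨hne, hlength, hchain⟩ := Complex.isBlock_iff.1 h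
  refine Complex.isBlock_iff.2 ⟨by simpa using hne, by simpa using hlength, ?_⟩
  refine (List.isChain_map _).2 (hchain.imp fun d d' hdd' ↦ ⟨φ.adj_mD hdd'.1, ?_⟩)
  rw [dLet_mD, dLet_mD, hdd'.2]

theorem chainStep_map {b b' : List Y.D} (h : Y.chainStep b b') :
    Z.chainStep (b.map φ.mD) (b'.map φ.mD) := by
  obtain ⟨d, d', hd, hd', hadj, hgap⟩ := h
  refine ⟨φ.mD d, φ.mD d', by simp [hd], by simp [hd'], φ.adj_mD hadj, ?_⟩
  rw [dLet_mD, dLet_mD, hgap]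

theorem isHalfChain_map {bs : List (List Y.D)} (h : Y.IsHalfChain bs) :
    Z.IsHalfChain (bs.map (List.map φ.mD)) := by
  refine ⟨Complex.isCyclicChain_iff.2 ⟨by simpa using h.1.1.1, ?_, ?_⟩, ?_⟩
  · exact List.forall_mem_map.2 fun b hb ↦ φ.isBlock_map (h.isBlock b hb)
  · rw [← Cycle.map_coe, Cycle.chain_map]
    exact h.chain.imp fun _ _ ↦ φ.chainStep_map
  · exact List.forall_mem_map.2 fun b hb ↦ (List.length_map _).trans (h.2 b hb)

end Hom

namespace Complex.IsTiledSurface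

variable {g : ℕ} {Y : Complex g}

theorem p1 (h : Y.IsTiledSurface) : Y.P1 := by
  obtain ⟨Z, hZ, φ, -, hφE, -⟩ := h
  refine ⟨fun e e' hsrc hlab ↦ hφE (hZ.1.1 _ _ ?_ ?_), fun e e' hdst hlab ↦ hφE (hZ.1.2 _ _ ?_ ?_)⟩
  · rw [φ.hsrc, φ.hsrc, hsrc]
  · rw [φ.hlab, φ.hlab, hlab]
  · rw [φ.hdst, φ.hdst, hdst]
  · rw [φ.hlab, φ.hlab, hlab]

theorem p3 (h : Y.IsTiledSurface) (hg : 0 < g) : Y.P3 := by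
  obtain ⟨Z, hZ, φ, hφV, -, hφF⟩ := h
  refine ⟨fun f ↦ ?_, fun f f' hff' ↦ hφF (hZ.2.1.2 ?_)⟩
  · obtain ⟨⟨v, hwalk⟩, hword⟩ := hZ.2.1.1 (φ.mF f)
    rw [φ.bdry_mF] at hwalk hword
    rw [φ.wordOf_map] at hword
    obtain ⟨d, l, hdl⟩ : ∃ d l, Y.bdry f = d :: l := by
      refine List.exists_cons_of_ne_nil fun hnil ↦ ?_
      have hlength := congrArg List.length hword
      rw [hnil, wordOf, List.map_nil, List.length_nil, length_relatorWord] at hlength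
      omega
    have hv : φ.mV (Y.dTail d) = v := by
      rw [hdl, List.map_cons, walkFrom_cons_iff] at hwalk
      exact (φ.dTail_mD d).symm.trans hwalk.1
    exact ⟨⟨_, (φ.walkFrom_map_iff hφV).1 (hv ▸ hwalk)⟩, hword⟩
  · rw [φ.bdry_mF, φ.bdry_mF, hff']

end Complex.IsTiledSurface

namespace SubC

variable {g : ℕ} {Z₁ Z₂ : Complex g} {φ : Hom Z₁ Z₂} {T : SubC Z₂}

/-- The preimage of a subcomplex under a morphism. -/
def comap (φ : Hom Z₁ Z₂) (T : SubC Z₂) : SubC Z₁ :=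
  ⟨φ.mV ⁻¹' T.sV, φ.mE ⁻¹' T.sE, φ.mF ⁻¹' T.sF⟩

theorem IsSub.comap (hT : T.IsSub) : (T.comap φ).IsSub := by
  refine ⟨fun e he ↦ ⟨?_, ?_⟩, fun f hf d hd ↦ hT.2 _ hf _ (φ.mD_mem_bdry hd)⟩
  · exact (φ.hsrc e ▸ (hT.1 _ he).1 : φ.mV (Z₁.src e) ∈ T.sV)
  · exact (φ.hdst e ▸ (hT.1 _ he).2 : φ.mV (Z₁.dst e) ∈ T.sV)

theorem image_le_iff {S : SubC Z₁} : (image φ S).le T ↔ S.le (T.comap φ) := by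
  simp only [le, image, comap, Set.image_subset_iff]

theorem SBRcl_le {S T : SubC Z₁} (hT : T.IsSub) (hST : S.le T)
    (hsT : Z₁.StronglyBoundaryReduced T.sE T.sF) : (SBRcl Z₁ S).le T :=
  ⟨Set.biInter_subset_of_mem ⟨hT, hST, hsT⟩, Set.biInter_subset_of_mem ⟨hT, hST, hsT⟩,
    Set.biInter_subset_of_mem ⟨hT, hST, hsT⟩⟩

theorem le_SBRcl {S R : SubC Z₁}
    (h : ∀ T : SubC Z₁, T.IsSub → S.le T → Z₁.StronglyBoundaryReduced T.sE T.sF → R.le T) :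
    R.le (SBRcl Z₁ S) :=
  ⟨Set.subset_iInter₂ fun T hT ↦ (h T hT.1 hT.2.1 hT.2.2).1,
    Set.subset_iInter₂ fun T hT ↦ (h T hT.1 hT.2.1 hT.2.2).2.1,
    Set.subset_iInter₂ fun T hT ↦ (h T hT.1 hT.2.1 hT.2.2).2.2⟩

end SubC

namespace Complex

variable {g : ℕ} {Z₁ Z₂ : Complex g} {φ : Hom Z₁ Z₂} {T : SubC Z₂}

theorem faceStep_of_mD (hP1₁ : Z₁.P1) (hP3₁ : Z₁.P3) (hP1₂ : Z₂.P1) (hP3₂ : Z₂.P3) {d d' : Z₁.D}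
    (hadj : Z₁.adj d d') (hface : Z₁.HasFace d) (h : Z₂.faceStep T.sF (φ.mD d) (φ.mD d')) :
    Z₁.faceStep (T.comap φ).sF d d' := by
  obtain ⟨f₂, hf₂, hpair⟩ := h
  obtain ⟨f, hdf⟩ := hface
  have hgap : gapN (Z₁.dLet d) (Z₁.dLet d') = 0 := by
    simpa only [φ.dLet_mD] using (hP3₂.blockStep_of_infix_bdry hpair).2
  obtain ⟨x, hx, hdx⟩ := hP3₁.exists_blockStep_of_mem_bdry hdf
  obtain rfl := hP1₁.blockStep_right_unique hdx ⟨hadj, hgap⟩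
  have hmem : φ.mD d ∈ Z₂.bdry f₂ := by
    simpa using hpair.subset List.mem_cons_self
  obtain rfl := eq_of_mem_bdry hP1₂ hP3₂ hmem (φ.mD_mem_bdry hdf)
  exact ⟨f, hf₂, hx⟩

theorem nextD_mD (hP3₁ : Z₁.P3) (hP1₂ : Z₂.P1) {d d' : Z₁.D} (h : Z₁.nextD (T.comap φ).sE d d')
    (hface : Z₁.HasFace d) (hgap : gapN (Z₁.dLet d) (Z₁.dLet d') ≤ 1) :
    Z₂.nextD T.sE (φ.mD d) (φ.mD d') := by
  obtain ⟨hmem, hadj, hmin⟩ := h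
  refine ⟨hmem, φ.adj_mD hadj, fun e he hde ↦ ?_⟩
  by_contra! hlt
  obtain ⟨f, hdf⟩ := hface
  obtain ⟨x, -, hdx⟩ := hP3₁.exists_blockStep_of_mem_bdry hdf
  rw [φ.dLet_mD, φ.dLet_mD] at hlt
  obtain rfl : φ.mD x = e := hP1₂.eq_of_adj_of_gapN_eq (φ.adj_mD hdx.1) hde (by
    rw [φ.dLet_mD, φ.dLet_mD, hdx.2]
    omega)
  have := hmin x he hdx.1
  have := hdx.2
  omega

/-- The next edge `x` of the `4g`-gon to the left of `d` has gap `0` after `d`. So if the boundary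
of `T` continued from `φ d` before `φ d'`, it would do so along `φ x`, and `x` would precede `d'`
on the boundary of the preimage. -/
theorem bStep_mD (hP1₁ : Z₁.P1) (hP3₁ : Z₁.P3) (hP1₂ : Z₂.P1) (hP3₂ : Z₂.P3) {d d' : Z₁.D}
    (h : Z₁.bStep (T.comap φ).sE (T.comap φ).sF d d') (hface : Z₁.HasFace d)
    (hgap : gapN (Z₁.dLet d) (Z₁.dLet d') ≤ 1) : Z₂.bStep T.sE T.sF (φ.mD d) (φ.mD d') :=
  ⟨h.1, nextD_mD hP3₁ hP1₂ h.2.1 hface hgap,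
    fun hstep ↦ h.2.2 (faceStep_of_mD hP1₁ hP3₁ hP1₂ hP3₂ h.2.1.2.1 hface hstep)⟩

theorem bPath_map_of_isBlock (hP1₁ : Z₁.P1) (hP3₁ : Z₁.P3) (hP1₂ : Z₂.P1) (hP3₂ : Z₂.P3)
    {l : List Z₁.D} (hl : Z₁.IsBlock l) (hface : ∀ d ∈ l, Z₁.HasFace d)
    (h : Z₁.BPath (T.comap φ).sE (T.comap φ).sF l) : Z₂.BPath T.sE T.sF (l.map φ.mD) := by
  obtain ⟨hne, hmem, hchain⟩ := h
  refine ⟨by simpa using hne, List.forall_mem_map.2 hmem, (List.isChain_map _).2 ?_⟩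
  refine (isChain_and.2 ⟨hchain, (isBlock_iff.1 hl).2.2⟩).imp_of_mem_imp fun d d' hd _ hdd' ↦ ?_
  exact bStep_mD hP1₁ hP3₁ hP1₂ hP3₂ hdd'.1 (hface d hd) (hdd'.2.2.trans_le zero_le_one)

theorem bCycle_map_of_gapN_le_one (hP1₁ : Z₁.P1) (hP3₁ : Z₁.P3) (hP1₂ : Z₂.P1) (hP3₂ : Z₂.P3)
    {l : List Z₁.D} (hgap : (l : Cycle Z₁.D).Chain fun d d' ↦ gapN (Z₁.dLet d) (Z₁.dLet d') ≤ 1)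
    (hface : ∀ d ∈ l, Z₁.HasFace d) (h : Z₁.BCycle (T.comap φ).sE (T.comap φ).sF l) :
    Z₂.BCycle T.sE T.sF (l.map φ.mD) := by
  obtain ⟨hne, hmem, hchain⟩ := bCycle_iff.1 h
  refine bCycle_iff.2 ⟨by simpa using hne, List.forall_mem_map.2 hmem, ?_⟩
  rw [← Cycle.map_coe, Cycle.chain_map]
  refine cycleChain_imp_of_mem (fun d hd d' _ hdd' ↦ ?_) (cycleChain_and.2 ⟨hchain, hgap⟩)
  exact bStep_mD hP1₁ hP3₁ hP1₂ hP3₂ hdd'.1 (hface d hd) hdd'.2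

theorem StronglyBoundaryReduced.comap (hP1₁ : Z₁.P1) (hP3₁ : Z₁.P3) (hP1₂ : Z₂.P1)
    (hP3₂ : Z₂.P3) (hT : Z₂.StronglyBoundaryReduced T.sE T.sF)
    (hs : Z₁.StronglyBoundaryReduced Set.univ Set.univ) :
    Z₁.StronglyBoundaryReduced (T.comap φ).sE (T.comap φ).sF := by
  refine ⟨fun l hpath ⟨hblock, hlength⟩ ↦ ?_, fun bs hbs hcycle ↦ ?_⟩
  · have hface : ∀ d ∈ l, Z₁.HasFace d := fun d ↦ hs.hasFace_of_isBlock hP1₁ hP3₁ hblock hlength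
    exact hT.1 _ (bPath_map_of_isBlock hP1₁ hP3₁ hP1₂ hP3₂ hblock hface hpath)
      ⟨φ.isBlock_map hblock, by rwa [List.length_map]⟩
  · have hface : ∀ d ∈ bs.flatten, Z₁.HasFace d := fun d ↦ hbs.hasFace hP1₁ hP3₁ hs
    refine hT.2 _ (φ.isHalfChain_map hbs) ?_
    rw [← List.map_flatten]
    exact bCycle_map_of_gapN_le_one hP1₁ hP3₁ hP1₂ hP3₂ hbs.chain_gapN_le_one hface hcycle

end Complex

theorem statement_5_general {g : ℕ} {Z₁ Z₂ : Complex g} (hP1₁ : Z₁.P1) (hP3₁ : Z₁.P3)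
    (hP1₂ : Z₂.P1) (hP3₂ : Z₂.P3) (hs₁ : Z₁.StronglyBoundaryReduced Set.univ Set.univ)
    (φ : Hom Z₁ Z₂) (S : SubC Z₁) :
    (SubC.image φ (SBRcl Z₁ S)).le (SBRcl Z₂ (SubC.image φ S)) := by
  refine SubC.le_SBRcl fun T hT hST hsT ↦ SubC.image_le_iff.2 ?_
  exact SubC.SBRcl_le hT.comap (SubC.image_le_iff.1 hST) (hsT.comap hP1₁ hP3₁ hP1₂ hP3₂ hs₁)

/-- Let `f = φ : Z₁ → Z₂` be a morphism between two strongly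
boundary reduced tiled surfaces and `Y` (= `S`) a sub-tiled-surface of `Z₁`.
Then `f(SBR(Y ↪ Z₁)) ⊆ SBR(f(Y) ↪ Z₂)`. -/
theorem statement_5 (g : ℕ) (hg : 2 ≤ g) (Z₁ Z₂ : Complex g)
    (h₁ : Z₁.IsTiledSurface) (h₂ : Z₂.IsTiledSurface)
    (hs₁ : Z₁.StronglyBoundaryReduced Set.univ Set.univ)
    (hs₂ : Z₂.StronglyBoundaryReduced Set.univ Set.univ)
    (φ : Hom Z₁ Z₂) (S : SubC Z₁) (hS : S.IsSub) :
    (SubC.image φ (SBRcl Z₁ S)).le (SBRcl Z₂ (SubC.image φ S)) :=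
  have hg' : 0 < g := by omega
  statement_5_general h₁.p1 (h₁.p3 hg') h₂.p1 (h₂.p3 hg') hs₁ φ S

end CS

end
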